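/- Let n > q ≥ 3 and 3 ≤ k ≤ q. For g ∈ SO(k) let ĝ ∈ SO(n) be the block-diagonal matrix acting as g on the coordinates (x₁,…,x_k) and as the identity on (x_{k+1},…,x_n). Let U be an open neighborhood of 0 in ℝⁿ with ĝ(U) = U for all g ∈ SO(k), and let Π be a smooth Nambu structure of order q on U such that: (1) Π − Π_{k,q} is flat along Σ = {x ∈ U : x₁ = ⋯ = x_{q+1} = 0}; and (2) (e*_{k+1} ∧ ⋯ ∧ e*_{q+1}) ⌟ Π = (e*_{k+1} ∧ ⋯ ∧ e*_{q+1}) ⌟ Π_{k,q} on U. Then Π is SO(k)-invariant: (⋀^q ĝ)(Π(ĝ⁻¹ x)) = Π(x) for every g ∈ SO(k) and every x ∈ U. -/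

import Mathlib

open scoped ContDiff

namespace NambuLin

/-- Index set for the standard basis of the `q`-th exterior power of `ℝⁿ`:
increasing multi-indices, encoded as `q`-element subsets of `Fin n`. -/
abbrev Idx (n q : ℕ) := {s : Finset (Fin n) // s.card = q}

/-- A `q`-vector of `ℝⁿ`, given by its coordinates in the standard basis
`{e_{i₁} ∧ ⋯ ∧ e_{i_q}}` of `⋀^q(ℝⁿ)`. -/
abbrev MultiVec (n q : ℕ) := Idx n q → ℝ

/-- The Jacobian matrix of a map `φ : ℝⁿ → ℝⁿ` at a point `x`. -/
noncomputable def jac {n : ℕ} (φ : (Fin n → ℝ) → (Fin n → ℝ)) (x : Fin n → ℝ) :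
    Matrix (Fin n) (Fin n) ℝ :=
  Matrix.of fun i j => fderiv ℝ φ x (Pi.single j 1) i

/-- The `q`-th exterior power `⋀^q A` of a matrix `A`, acting on `q`-vectors in
coordinates: `((⋀^q A) w)_J = ∑_I det(A[J,I]) w_I`. -/
noncomputable def extPow (n q : ℕ) (A : Matrix (Fin n) (Fin n) ℝ) (w : MultiVec n q) :
    MultiVec n q :=
  fun J => ∑ I : Idx n q,
    (A.submatrix (J.1.orderEmbOfFin J.2) (I.1.orderEmbOfFin I.2)).det * w I

/-- The constant `q`-vector `e₁ ∧ ⋯ ∧ e_q` in coordinates. -/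
def stdVec (n q : ℕ) : MultiVec n q :=
  fun J => if (J : Finset (Fin n)) = Finset.univ.filter (fun i : Fin n => (i : ℕ) < q) then 1 else 0

/-- `φ` is a `C^∞` diffeomorphism from the open set `W` onto the open set `φ '' W`. -/
def IsSmoothDiffeoOn {n : ℕ} (φ : (Fin n → ℝ) → (Fin n → ℝ)) (W : Set (Fin n → ℝ)) : Prop :=
  IsOpen W ∧ IsOpen (φ '' W) ∧ ContDiffOn ℝ ∞ φ W ∧
    ∃ ψ : (Fin n → ℝ) → (Fin n → ℝ), ContDiffOn ℝ ∞ ψ (φ '' W) ∧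
      (∀ x ∈ W, ψ (φ x) = x) ∧ (∀ y ∈ φ '' W, φ (ψ y) = y)

/-- `P` is a (smooth) Nambu structure of order `q` on `U`: it is a smooth `q`-vector
field, and around every point where it does not vanish there is a local `C^∞`
coordinate system in which it becomes the constant `q`-vector `e₁ ∧ ⋯ ∧ e_q`. -/
def IsNambu (n q : ℕ) (P : (Fin n → ℝ) → MultiVec n q) (U : Set (Fin n → ℝ)) : Prop :=
  ContDiffOn ℝ ∞ P U ∧
    ∀ p ∈ U, P p ≠ 0 →
      ∃ W, p ∈ W ∧ W ⊆ U ∧ ∃ φ, IsSmoothDiffeoOn φ W ∧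
        ∀ x ∈ W, extPow n q (jac φ x) (P x) = stdVec n q

/-- The signs `ε_j` (`= 1` for the first `k` indices, `= -1` afterwards;
`0`-based indexing, so `ε_j = 1` iff `j < k`). -/
def eps {n : ℕ} (k : ℕ) (j : Fin n) : ℝ := if (j : ℕ) < k then 1 else -1

/-- The set of indices `{1, …, q+1}` (in `0`-based form: `{0,…,q}`). -/
def topIdx (n q : ℕ) : Finset (Fin n) := Finset.univ.filter (fun i : Fin n => (i : ℕ) < q + 1)

/-- The nondegenerate Type 1 linear Nambu structure `Π_{k,q}` of order `q` and
signature `(k, q+1-k)`: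
`Π_{k,q}(x) = ∑_{j=1}^{q+1} (−1)^{j−1} ε_j x_j e₁ ∧ ⋯ ∧ ê_j ∧ ⋯ ∧ e_{q+1}`
(here written with `0`-based indices `j`, whence the sign `(−1)^j`). -/
def modelPi (n q k : ℕ) (x : Fin n → ℝ) : MultiVec n q :=
  fun J => ∑ j : Fin n,
    if ((j : ℕ) < q + 1 ∧ (J : Finset (Fin n)) = (topIdx n q).erase j)
    then (-1 : ℝ) ^ (j : ℕ) * eps k j * x j else 0

/-- The shuffle sign `(−1)^{#{(s,t) ∈ S × K : s > t}}`: for disjoint increasing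
multi-indices `S, K` one has `e*_S ∧ e*_K = shufSign S K · e*_{S ∪ K}`. -/
def shufSign {n : ℕ} (S K : Finset (Fin n)) : ℝ :=
  (-1 : ℝ) ^ (((S ×ˢ K).filter fun p : Fin n × Fin n => p.2 < p.1).card)

/-- The contraction `e*_S ⌟ w` of a `q`-vector `w` with the basis covector
`e*_S = e*_{s₁} ∧ ⋯ ∧ e*_{s_r}` (`S = {s₁ < ⋯ < s_r}`, `r = q - m`), determined by
`⟨e*_K, e*_S ⌟ w⟩ = ⟨e*_S ∧ e*_K, w⟩`: its `K`-th coordinate is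
`shufSign S K · w_{S ∪ K}` when `S, K` are disjoint (and `0` otherwise, in
accordance with the graded pairing). -/
def contr (n q m : ℕ) (S : Finset (Fin n)) (w : MultiVec n q) : MultiVec n m :=
  fun K => if h : Disjoint S (K : Finset (Fin n)) ∧ (S ∪ (K : Finset (Fin n))).card = q
    then shufSign S K.1 * w ⟨S ∪ K.1, h.2⟩ else 0

/-- The set of indices `{k+1, …, q+1}` (in `0`-based form: `{k,…,q}`), so that
`e*_{k+1} ∧ ⋯ ∧ e*_{q+1}` corresponds to `sliceIdx n q k`. -/
def sliceIdx (n q k : ℕ) : Finset (Fin n) :=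
  Finset.univ.filter fun i : Fin n => k ≤ (i : ℕ) ∧ (i : ℕ) < q + 1

/-- The block-diagonal matrix `ĝ ∈ SO(n)` acting as `g ∈ SO(k)` on the coordinates
`x₁,…,x_k` and as the identity on `x_{k+1},…,x_n`. -/
def ghat (n k : ℕ) (g : Matrix (Fin k) (Fin k) ℝ) : Matrix (Fin n) (Fin n) ℝ :=
  Matrix.of fun i j =>
    if hi : (i : ℕ) < k then
      (if hj : (j : ℕ) < k then g ⟨i, hi⟩ ⟨j, hj⟩ else 0)
    else (if i = j then 1 else 0)

/-!
Near a point where `Π ≠ 0` the last `n - q` coordinates of a chart straightening `Π` are first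
integrals. Their differentials annihilate the plane of `Π`, and together with decomposability the
slice condition forces such covectors to be proportional to `(x₁, …, x_k)` on the first `k`
coordinates. A rotation path `ĝ_t x` has velocity orthogonal to `(x₁, …, x_k)`, so the first
integrals are constant along it. Hence `ĝ_t`, for small `t`, maps the leaves to leaves and `Π` to a
multiple of `Π`, and comparing one coordinate of the slice shows that the multiple is `1`. Every
rotation is a product of pairs of reflections, hence the endpoint of a differentiable path of
rotations, along which the local statement propagates. The points with `(x₁, …, x_k) = 0` are then
reached by continuity.
-/

/-! ### Exterior powers in coordinates -/

section ExteriorPower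

variable {n q : ℕ}

/-- The coordinates of `⋀^q ℝⁿ` in its standard basis, identifying Mathlib's exterior power with
`MultiVec n q`. -/
noncomputable def coords (n q : ℕ) : (⋀[ℝ]^q (Fin n → ℝ)) ≃ₗ[ℝ] MultiVec n q :=
  ((Pi.basisFun ℝ (Fin n)).exteriorPower q).equivFun

/-- The `q`-vector `v₁ ∧ ⋯ ∧ v_q` of the columns `v₁, …, v_q` of `M`, in coordinates. -/
def minors (M : Matrix (Fin n) (Fin q) ℝ) : MultiVec n q :=
  fun J => (M.submatrix (J.1.orderEmbOfFin J.2) id).det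

lemma coords_ιMulti (v : Fin q → Fin n → ℝ) :
    coords n q (exteriorPower.ιMulti ℝ q v) = minors (Matrix.of v).transpose := by
  funext J
  refine (exteriorPower.basis_repr_apply ℝ q _ _ _).trans ?_
  refine (exteriorPower.ιMultiDual_apply_ιMulti ℝ q _ _ v).trans ?_
  rw [minors, ← Matrix.det_transpose]
  rfl

lemma extPow_coords (A : Matrix (Fin n) (Fin n) ℝ) (η : ⋀[ℝ]^q (Fin n → ℝ)) :
    extPow n q A (coords n q η) = coords n q (exteriorPower.map q A.toLin' η) := by
  let b : Module.Basis (Idx n q) ℝ (⋀[ℝ]^q (Fin n → ℝ)) :=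
    (Pi.basisFun ℝ (Fin n)).exteriorPower q
  have hb (I : Idx n q) :
      b I = exteriorPower.ιMulti ℝ q fun i => Pi.basisFun ℝ (Fin n) (I.1.orderEmbOfFin I.2 i) :=
    exteriorPower.basis_apply ℝ q _ I
  funext J
  conv_rhs => rw [← b.sum_equivFun η]
  simp only [map_sum, map_smul, Finset.sum_apply, Pi.smul_apply, smul_eq_mul, extPow]
  refine Finset.sum_congr rfl fun I _ => ?_
  rw [mul_comm, hb, exteriorPower.map_apply_ιMulti, coords_ιMulti, minors]
  congr 2
  ext i j
  simp

lemma extPow_mul (A B : Matrix (Fin n) (Fin n) ℝ) (w : MultiVec n q) :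
    extPow n q (A * B) w = extPow n q A (extPow n q B w) := by
  obtain ⟨η, rfl⟩ := (coords n q).surjective w
  simp only [extPow_coords, Matrix.toLin'_mul, exteriorPower.map_comp, LinearMap.comp_apply]

@[simp]
lemma extPow_one (w : MultiVec n q) : extPow n q 1 w = w := by
  obtain ⟨η, rfl⟩ := (coords n q).surjective w
  simp only [extPow_coords, Matrix.toLin'_one, exteriorPower.map_id, LinearMap.id_apply]

lemma extPow_smul (A : Matrix (Fin n) (Fin n) ℝ) (c : ℝ) (w : MultiVec n q) :
    extPow n q A (c • w) = c • extPow n q A w := by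
  obtain ⟨η, rfl⟩ := (coords n q).surjective w
  simp only [← map_smul, extPow_coords]

lemma continuous_extPow (A : Matrix (Fin n) (Fin n) ℝ) : Continuous (extPow n q A) := by
  unfold extPow
  fun_prop

end ExteriorPower

section Minors

variable {n q : ℕ}

lemma extPow_nonsing_inv_extPow {A : Matrix (Fin n) (Fin n) ℝ} (hA : IsUnit A.det)
    (w : MultiVec n q) : extPow n q A⁻¹ (extPow n q A w) = w := by
  rw [← extPow_mul, Matrix.nonsing_inv_mul _ hA, extPow_one]

lemma det_submatrix_orderEmb_eq_zero {R : Type*} [CommRing R] {m : Type*} (A : Matrix (Fin n) m R)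
    (f : Fin q → m) {J : Idx n q} {s : Fin n} (hs : s ∈ J.1) (h : ∀ l, A s (f l) = 0) :
    (A.submatrix (J.1.orderEmbOfFin J.2) f).det = 0 := by
  obtain ⟨a, rfl⟩ : s ∈ Set.range (J.1.orderEmbOfFin J.2) := by
    rwa [Finset.range_orderEmbOfFin]
  exact Matrix.det_eq_zero_of_row_eq_zero a h

/-- The multi-index `{0, …, q-1}` of `e₁ ∧ ⋯ ∧ e_q`. -/
def stdIdx (n q : ℕ) (h : q ≤ n) : Idx n q :=
  ⟨Finset.univ.filter fun i : Fin n => (i : ℕ) < q, by rw [Fin.card_filter_val_lt, min_eq_right h]⟩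

lemma stdVec_eq_single (h : q ≤ n) : stdVec n q = Pi.single (stdIdx n q h) 1 := by
  funext J
  simp [stdVec, stdIdx, Pi.single_apply, Subtype.ext_iff]

lemma orderEmbOfFin_stdIdx (h : q ≤ n) :
    ((stdIdx n q h).1.orderEmbOfFin (stdIdx n q h).2 : Fin q → Fin n) = Fin.castLE h :=
  (Finset.orderEmbOfFin_unique _ (fun x => by simp [stdIdx]) (Fin.strictMono_castLE h)).symm

lemma extPow_stdVec (h : q ≤ n) (A : Matrix (Fin n) (Fin n) ℝ) :
    extPow n q A (stdVec n q) = minors (A.submatrix id (Fin.castLE h)) := by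
  funext J
  simp [extPow, minors, stdVec_eq_single h, Pi.single_apply, orderEmbOfFin_stdIdx]

lemma exists_extPow_stdVec_eq_smul (h : q ≤ n) (B : Matrix (Fin n) (Fin n) ℝ)
    (hB : ∀ i j : Fin n, q ≤ (i : ℕ) → (j : ℕ) < q → B i j = 0) :
    ∃ c : ℝ, extPow n q B (stdVec n q) = c • stdVec n q := by
  refine ⟨extPow n q B (stdVec n q) (stdIdx n q h), ?_⟩
  funext J
  by_cases hJ : J = stdIdx n q h
  · simp [hJ, stdVec_eq_single h]
  obtain ⟨s, hsJ, hs⟩ : ∃ s ∈ J.1, s ∉ (stdIdx n q h).1 :=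
    (Set.powersetCard.exists_mem_notMem_iff_ne _ _).1 hJ
  have hqs : q ≤ (s : ℕ) := by simpa [stdIdx] using hs
  rw [extPow_stdVec h, minors,
    det_submatrix_orderEmb_eq_zero (B.submatrix id _) _ hsJ fun l => hB s _ hqs l.2]
  simp [stdVec_eq_single h, hJ]

/-- `X` and `Y` straighten `w` and `w'`, so the kernel of their last `n - q` rows is the plane
spanned by `w`, resp. `w'`; the hypothesis on rows says that `A` maps the first plane into the
second. -/
lemma exists_extPow_eq_smul_of_rows_eq (h : q ≤ n) {A X Y : Matrix (Fin n) (Fin n) ℝ}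
    {w w' : MultiVec n q} (hX : IsUnit X.det) (hY : IsUnit Y.det)
    (hw : extPow n q X w = stdVec n q) (hw' : extPow n q Y w' = stdVec n q)
    (hrows : ∀ i : Fin n, q ≤ (i : ℕ) → (Y * A) i = X i) :
    ∃ c : ℝ, extPow n q A w = c • w' := by
  have hblock : ∀ i j : Fin n, q ≤ (i : ℕ) → (j : ℕ) < q → (Y * A * X⁻¹) i j = 0 := by
    intro i j hi hj
    have hij : i ≠ j := by rintro rfl; omega
    rw [Matrix.mul_apply, hrows i hi, ← Matrix.mul_apply, Matrix.mul_nonsing_inv _ hX,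
      Matrix.one_apply_ne hij]
  obtain ⟨c, hc⟩ := exists_extPow_stdVec_eq_smul h _ hblock
  refine ⟨c, ?_⟩
  calc extPow n q A w = extPow n q Y⁻¹ (extPow n q (Y * A * X⁻¹) (stdVec n q)) := by
        rw [← hw, extPow_mul _ X⁻¹, extPow_nonsing_inv_extPow hX, extPow_mul Y,
          extPow_nonsing_inv_extPow hY]
    _ = c • w' := by rw [hc, extPow_smul, ← hw', extPow_nonsing_inv_extPow hY]

end Minors

/-! ### Slices and the model -/

section Slice

variable {n q k : ℕ}

lemma mem_sliceIdx {i : Fin n} : i ∈ sliceIdx n q k ↔ k ≤ (i : ℕ) ∧ (i : ℕ) < q + 1 := by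
  simp [sliceIdx]

lemma mem_topIdx {i : Fin n} : i ∈ topIdx n q ↔ (i : ℕ) < q + 1 := by
  simp [topIdx]

lemma card_topIdx (hn : q < n) : (topIdx n q).card = q + 1 := by
  rw [topIdx, Fin.card_filter_val_lt, min_eq_right hn]

lemma card_sliceIdx (hn : q < n) (hkq : k ≤ q + 1) : (sliceIdx n q k).card = q + 1 - k := by
  have hsub : (Finset.univ.filter fun i : Fin n => (i : ℕ) < k) ⊆ topIdx n q := fun i => by
    simp only [mem_topIdx, Finset.mem_filter, Finset.mem_univ, true_and]
    omega
  have hdiff : sliceIdx n q k = topIdx n q \ Finset.univ.filter fun i : Fin n => (i : ℕ) < k := by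
    ext i
    simp only [mem_sliceIdx, Finset.mem_sdiff, mem_topIdx, Finset.mem_filter, Finset.mem_univ,
      true_and]
    omega
  rw [hdiff, Finset.card_sdiff_of_subset hsub, card_topIdx hn, Fin.card_filter_val_lt,
    min_eq_right (hkq.trans hn)]

/-- Two `q`-vectors with the same coordinates on all multi-indices containing `S`; for
`S.card + m = q` this says that their contractions with `e*_S` agree. -/
def EqOnSlice (S : Finset (Fin n)) (w w' : MultiVec n q) : Prop :=
  ∀ J : Idx n q, S ⊆ J.1 → w J = w' J

lemma eqOnSlice_of_contr_eq {m : ℕ} {S : Finset (Fin n)} {w w' : MultiVec n q}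
    (hm : S.card + m = q) (h : contr n q m S w = contr n q m S w') : EqOnSlice S w w' := by
  intro J hJ
  have hunion : S ∪ (J.1 \ S) = J.1 := Finset.union_sdiff_of_subset hJ
  have hcard : (J.1 \ S).card = m := by rw [Finset.card_sdiff_of_subset hJ, J.2]; omega
  have hS : Disjoint S (J.1 \ S) ∧ (S ∪ (J.1 \ S)).card = q :=
    ⟨Finset.disjoint_sdiff, by rw [hunion, J.2]⟩
  have hidx : (⟨S ∪ (J.1 \ S), hS.2⟩ : Idx n q) = J := Subtype.ext hunion
  have hK := congrFun h ⟨J.1 \ S, hcard⟩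
  simp only [contr] at hK
  rw [dif_pos hS, dif_pos hS, hidx] at hK
  exact mul_left_cancel₀ (by unfold shufSign; positivity) hK

lemma EqOnSlice.extPow {S : Finset (Fin n)} {w w' : MultiVec n q} (h : EqOnSlice S w w')
    {A : Matrix (Fin n) (Fin n) ℝ} (hA : ∀ s ∈ S, ∀ j, j ≠ s → A s j = 0) :
    EqOnSlice S (extPow n q A w) (extPow n q A w') := by
  intro J hJ
  refine Finset.sum_congr rfl fun I _ => ?_
  by_cases hI : S ⊆ I.1
  · rw [h I hI]
  obtain ⟨s, hs, hsI⟩ := Finset.not_subset.1 hI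
  rw [det_submatrix_orderEmb_eq_zero A _ (hJ hs) fun l => hA s hs _ ?_, zero_mul, zero_mul]
  exact fun hl => hsI (hl ▸ Finset.orderEmbOfFin_mem _ _ _)

/-- The multi-index `{0, …, q} \ {b}`, on which `modelPi` has the coordinate `± x_b`. -/
def topErase (hn : q < n) (b : Fin (q + 1)) : Idx n q :=
  ⟨(topIdx n q).erase (Fin.castLE hn b), by
    have hb : Fin.castLE hn b ∈ topIdx n q := mem_topIdx.2 b.2
    rw [Finset.card_erase_of_mem hb, card_topIdx hn, Nat.add_sub_cancel]⟩

lemma mem_topErase {hn : q < n} {b : Fin (q + 1)} {i : Fin n} :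
    i ∈ (topErase hn b).1 ↔ i ≠ Fin.castLE hn b ∧ (i : ℕ) < q + 1 := by
  simp only [topErase, Finset.mem_erase, mem_topIdx]

lemma orderEmbOfFin_topErase (hn : q < n) (b : Fin (q + 1)) :
    ((topErase hn b).1.orderEmbOfFin (topErase hn b).2 : Fin q → Fin n) =
      Fin.castLE hn ∘ b.succAbove := by
  refine (Finset.orderEmbOfFin_unique _ (fun i => ?_)
    ((Fin.strictMono_castLE hn).comp (Fin.strictMono_succAbove b))).symm
  exact mem_topErase.2 ⟨by simp [Fin.succAbove_ne], (b.succAbove i).2⟩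

lemma topErase_injective (hn : q < n) : Function.Injective (topErase hn) := by
  intro a b hab
  by_contra hne
  have ha : Fin.castLE hn a ∈ (topErase hn a).1 :=
    hab ▸ mem_topErase.2 ⟨by simpa using hne, a.2⟩
  exact (mem_topErase.1 ha).1 rfl

lemma sliceIdx_subset_topErase (hn : q < n) {b : Fin (q + 1)} (hb : (b : ℕ) < k) :
    sliceIdx n q k ⊆ (topErase hn b).1 := by
  intro i hi
  rw [mem_sliceIdx] at hi
  refine mem_topErase.2 ⟨?_, hi.2⟩
  rintro rfl
  exact absurd hb (not_lt.2 hi.1)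

lemma modelPi_apply (hn : q < n) (x : Fin n → ℝ) (J : Idx n q) :
    modelPi n q k x J = ∑ j : Fin (q + 1), if J = topErase hn j then
      (-1) ^ (j : ℕ) * eps k j * x (Fin.castLE hn j) else 0 := by
  symm
  refine Fintype.sum_of_injective (Fin.castLE hn) (Fin.castLE_injective hn) _ _ (fun i hi => ?_)
    fun j => ?_
  · exact if_neg fun h => hi ⟨⟨i, h.1⟩, rfl⟩
  · simp [Subtype.ext_iff, topErase, eps, Fin.is_le]

lemma modelPi_topErase (hn : q < n) (x : Fin n → ℝ) (b : Fin (q + 1)) :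
    modelPi n q k x (topErase hn b) = (-1) ^ (b : ℕ) * eps k b * x (Fin.castLE hn b) := by
  simp [modelPi_apply hn, (topErase_injective hn).eq_iff]

lemma EqOnSlice.apply_topErase (hn : q < n) {w : MultiVec n q} {x : Fin n → ℝ}
    (h : EqOnSlice (sliceIdx n q k) w (modelPi n q k x)) {b : Fin (q + 1)} (hb : (b : ℕ) < k) :
    w (topErase hn b) = (-1) ^ (b : ℕ) * x (Fin.castLE hn b) := by
  rw [h _ (sliceIdx_subset_topErase hn hb), modelPi_topErase, eps, if_pos hb, mul_one]

lemma modelPi_eq_zero (hn : q < n) (x : Fin n → ℝ) {J : Idx n q}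
    (hJ : ∀ b, J ≠ topErase hn b) : modelPi n q k x J = 0 := by
  simp [modelPi_apply hn, hJ]

end Slice

/-! ### Rotations and the block matrices `ĝ` -/

section SpecialOrthogonal

variable {m R : Type*} [Fintype m] [DecidableEq m] [CommRing R] {A : Matrix m m R}

lemma mem_specialOrthogonalGroup_iff_transpose_mul :
    A ∈ Matrix.specialOrthogonalGroup m R ↔ A.transpose * A = 1 ∧ A.det = 1 := by
  rw [Matrix.mem_specialOrthogonalGroup_iff, Matrix.mem_orthogonalGroup_iff']

lemma transpose_mem_specialOrthogonalGroup (hA : A ∈ Matrix.specialOrthogonalGroup m R) :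
    A.transpose ∈ Matrix.specialOrthogonalGroup m R := by
  rw [mem_specialOrthogonalGroup_iff_transpose_mul] at hA ⊢
  rw [Matrix.transpose_transpose, Matrix.det_transpose]
  exact ⟨mul_eq_one_comm.1 hA.1, hA.2⟩

lemma adjugate_eq_transpose_of_mem_specialOrthogonalGroup
    (hA : A ∈ Matrix.specialOrthogonalGroup m R) : A.adjugate = A.transpose := by
  rw [mem_specialOrthogonalGroup_iff_transpose_mul] at hA
  calc A.adjugate = A.transpose * A * A.adjugate := by rw [hA.1, one_mul]
    _ = A.transpose := by rw [mul_assoc, Matrix.mul_adjugate, hA.2, one_smul, mul_one]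

end SpecialOrthogonal

section Ghat

variable {n q k : ℕ}

lemma ghat_apply_eq_zero (g : Matrix (Fin k) (Fin k) ℝ) {i j : Fin n} (hij : j ≠ i)
    (h : k ≤ (i : ℕ) ∨ k ≤ (j : ℕ)) : ghat n k g i j = 0 := by
  by_cases hi : (i : ℕ) < k
  · simp [ghat, hi, not_lt.2 (h.resolve_left (not_le.2 hi))]
  · simp [ghat, hi, hij.symm]

lemma ghat_add (m : ℕ) (g : Matrix (Fin k) (Fin k) ℝ) :
    ghat (k + m) k g = Matrix.reindex finSumFinEquiv finSumFinEquiv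
      (Matrix.fromBlocks g 0 0 (1 : Matrix (Fin m) (Fin m) ℝ)) := by
  ext i j
  refine Fin.addCases (fun i => ?_) (fun i => ?_) i <;>
    refine Fin.addCases (fun j => ?_) (fun j => ?_) j
  · simp [ghat]
  · simp [ghat]
  · have hij : Fin.natAdd k i ≠ Fin.castAdd m j := fun h => by
      have := congrArg Fin.val h
      simp only [Fin.val_natAdd, Fin.val_castAdd] at this
      omega
    simp [ghat, hij]
  · simp [ghat, Matrix.one_apply]

lemma ghat_mul (h : k ≤ n) (g g' : Matrix (Fin k) (Fin k) ℝ) :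
    ghat n k (g * g') = ghat n k g * ghat n k g' := by
  obtain ⟨m, rfl⟩ := Nat.exists_eq_add_of_le h
  rw [ghat_add, ghat_add, ghat_add, Matrix.reindex_apply, Matrix.reindex_apply,
    Matrix.reindex_apply, Matrix.submatrix_mul_equiv, Matrix.fromBlocks_multiply]
  simp

lemma ghat_one (h : k ≤ n) : ghat n k 1 = 1 := by
  obtain ⟨m, rfl⟩ := Nat.exists_eq_add_of_le h
  rw [ghat_add, Matrix.reindex_apply, Matrix.fromBlocks_one, Matrix.submatrix_one_equiv]

lemma ghat_transpose (h : k ≤ n) (g : Matrix (Fin k) (Fin k) ℝ) :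
    ghat n k g.transpose = (ghat n k g).transpose := by
  obtain ⟨m, rfl⟩ := Nat.exists_eq_add_of_le h
  simp [ghat_add, Matrix.fromBlocks_transpose]

lemma det_ghat (h : k ≤ n) (g : Matrix (Fin k) (Fin k) ℝ) : (ghat n k g).det = g.det := by
  obtain ⟨m, rfl⟩ := Nat.exists_eq_add_of_le h
  rw [ghat_add, Matrix.det_reindex_self, Matrix.det_fromBlocks_zero₂₁, Matrix.det_one, mul_one]

lemma ghat_mem_specialOrthogonalGroup (h : k ≤ n) {g : Matrix (Fin k) (Fin k) ℝ}
    (hg : g ∈ Matrix.specialOrthogonalGroup (Fin k) ℝ) :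
    ghat n k g ∈ Matrix.specialOrthogonalGroup (Fin n) ℝ := by
  rw [mem_specialOrthogonalGroup_iff_transpose_mul] at hg ⊢
  rw [← ghat_transpose h, ← ghat_mul h, hg.1, ghat_one h, det_ghat h]
  exact ⟨rfl, hg.2⟩

lemma eps_mul_ghat (g : Matrix (Fin k) (Fin k) ℝ) (i j : Fin n) :
    eps k j * ghat n k g i j = eps k i * ghat n k g i j := by
  by_cases h : j = i ∨ ((i : ℕ) < k ∧ (j : ℕ) < k)
  · rcases h with rfl | ⟨hi, hj⟩
    · rfl
    · simp [eps, hi, hj]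
  · rw [ghat_apply_eq_zero g (by tauto) (by omega), mul_zero, mul_zero]

lemma submatrix_castLE_ghat {m : ℕ} (h : m ≤ n) (g : Matrix (Fin k) (Fin k) ℝ) :
    (ghat n k g).submatrix (Fin.castLE h) (Fin.castLE h) = ghat m k g := by
  ext i j
  simp [ghat]

lemma ghat_mulVec_castLE {m : ℕ} (h : m ≤ n) (hkm : k ≤ m) (g : Matrix (Fin k) (Fin k) ℝ)
    (x : Fin n → ℝ) (i : Fin m) :
    (ghat n k g).mulVec x (Fin.castLE h i) = (ghat m k g).mulVec (x ∘ Fin.castLE h) i := by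
  simp only [Matrix.mulVec, dotProduct]
  symm
  refine Fintype.sum_of_injective (Fin.castLE h) (Fin.castLE_injective h) _ _ (fun j hj => ?_)
    fun j => ?_
  · have hmj : m ≤ (j : ℕ) := not_lt.1 fun hlt => hj ⟨⟨j, hlt⟩, rfl⟩
    have hji : j ≠ Fin.castLE h i := by rintro rfl; exact hj ⟨i, rfl⟩
    rw [ghat_apply_eq_zero g hji (.inr (hkm.trans hmj)), zero_mul]
  · rw [← submatrix_castLE_ghat h, Matrix.submatrix_apply, Function.comp_apply]

lemma neg_one_pow_mul_det_submatrix_succAbove {R : Type*} [CommRing R]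
    {A : Matrix (Fin (q + 1)) (Fin (q + 1)) R} (hA : A.adjugate = A.transpose)
    (b j : Fin (q + 1)) :
    (-1) ^ (j : ℕ) * (A.submatrix b.succAbove j.succAbove).det = (-1) ^ (b : ℕ) * A b j := by
  have h := congrFun (congrFun hA j) b
  rw [Matrix.adjugate_fin_succ_eq_det_submatrix, Matrix.transpose_apply] at h
  rw [← h, pow_add, mul_assoc, ← mul_assoc, ← mul_pow, neg_one_mul, neg_neg, one_pow, one_mul]

lemma extPow_modelPi_topErase (hn : q < n) (A : Matrix (Fin n) (Fin n) ℝ) (x : Fin n → ℝ)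
    (b : Fin (q + 1)) :
    extPow n q A (modelPi n q k x) (topErase hn b) =
      ∑ j : Fin (q + 1), ((A.submatrix (Fin.castLE hn) (Fin.castLE hn)).submatrix
        b.succAbove j.succAbove).det * ((-1) ^ (j : ℕ) * eps k j * x (Fin.castLE hn j)) := by
  symm
  refine Fintype.sum_of_injective (topErase hn) (topErase_injective hn) _ _ (fun J hJ => ?_)
    fun j => ?_
  · rw [modelPi_eq_zero hn x fun j hj => hJ ⟨j, hj.symm⟩, mul_zero]
  · rw [modelPi_topErase, orderEmbOfFin_topErase, orderEmbOfFin_topErase,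
      Matrix.submatrix_submatrix]

/-- The reason is that the cofactors of a rotation matrix are its entries. -/
lemma extPow_ghat_modelPi_topErase (hn : q < n) (hkq : k ≤ q + 1) {g : Matrix (Fin k) (Fin k) ℝ}
    (hg : g ∈ Matrix.specialOrthogonalGroup (Fin k) ℝ) (x : Fin n → ℝ) (b : Fin (q + 1)) :
    extPow n q (ghat n k g) (modelPi n q k x) (topErase hn b) =
      modelPi n q k ((ghat n k g).mulVec x) (topErase hn b) := by
  have hadj := adjugate_eq_transpose_of_mem_specialOrthogonalGroup
    (ghat_mem_specialOrthogonalGroup hkq hg)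
  rw [extPow_modelPi_topErase, modelPi_topErase, submatrix_castLE_ghat,
    ghat_mulVec_castLE hn hkq, Matrix.mulVec, dotProduct, Finset.mul_sum]
  refine Finset.sum_congr rfl fun j _ => ?_
  have hcof := neg_one_pow_mul_det_submatrix_succAbove hadj b j
  have heps := eps_mul_ghat g b j
  rw [Function.comp_apply]
  linear_combination (eps k j * x (Fin.castLE hn j)) * hcof +
    ((-1) ^ (b : ℕ) * x (Fin.castLE hn j)) * heps

end Ghat

/-! ### Annihilators of decomposable multivectors -/

section Annihilator

variable {n r : ℕ} {R : Type*} [CommRing R]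

lemma sum_mul_det_submatrix_cons {M : Matrix (Fin n) (Fin (r + 1)) R} {α : Fin n → R}
    (hα : Matrix.vecMul α M = 0) (e : Fin r → Fin n) :
    ∑ i, α i * (M.submatrix (Fin.cons i e : Fin (r + 1) → Fin n) id).det = 0 := by
  have hexp (i : Fin n) : (M.submatrix (Fin.cons i e : Fin (r + 1) → Fin n) id).det =
      ∑ j, M i j * ((-1) ^ (j : ℕ) * (M.submatrix e j.succAbove).det) := by
    rw [Matrix.det_succ_row_zero]
    refine Finset.sum_congr rfl fun j _ => ?_
    rw [Matrix.submatrix_submatrix, Matrix.submatrix_apply, Fin.cons_zero, id_eq, mul_assoc,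
      mul_left_comm]
    rfl
  have hcol (j : Fin (r + 1)) : ∑ i, α i * M i j = 0 := congrFun hα j
  simp_rw [hexp, Finset.mul_sum, ← mul_assoc]
  rw [Finset.sum_comm]
  simp_rw [← Finset.sum_mul, hcol, zero_mul, Finset.sum_const_zero]

lemma det_submatrix_cons_removeNth {m : Type*} (M : Matrix m (Fin (r + 1)) R)
    (f : Fin (r + 1) → m) (c : Fin (r + 1)) :
    (M.submatrix (Fin.cons (f c) (c.removeNth f) : Fin (r + 1) → m) id).det =
      (-1) ^ (c : ℕ) * (M.submatrix f id).det := by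
  rw [Fin.cons_removeNth_eq_comp_cycleRange_symm]
  have h := Matrix.det_permute c.cycleRange.symm (M.submatrix f id)
  rw [Equiv.Perm.sign_symm, Fin.sign_cycleRange] at h
  simpa [Matrix.submatrix_submatrix] using h

lemma strictMono_snoc {m : Type*} [Preorder m] {e : Fin r → m} (he : StrictMono e) {i : m}
    (hi : ∀ l, e l < i) : StrictMono (Fin.snoc e i : Fin (r + 1) → m) := by
  intro a b hab
  obtain ⟨a, rfl⟩ := Fin.exists_castSucc_eq.2 (Fin.ne_last_of_lt hab)
  rw [Fin.snoc_castSucc]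
  induction b using Fin.lastCases with
  | last => simpa only [Fin.snoc_last] using hi a
  | cast b => simpa only [Fin.snoc_castSucc] using he (Fin.castSucc_lt_castSucc_iff.1 hab)

lemma exists_det_submatrix_cons_eq (M : Matrix (Fin n) (Fin (r + 1)) ℝ) {e : Fin r → Fin n}
    (he : StrictMono e) {i : Fin n} (hi : ∀ l, e l < i) : ∃ J : Idx n (r + 1),
      i ∈ J.1 ∧ (∀ l, e l ∈ J.1) ∧
      (M.submatrix (Fin.cons i e : Fin (r + 1) → Fin n) id).det =
        (-1) ^ r * minors M J := by
  let f : Fin (r + 1) → Fin n := Fin.snoc e i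
  have hf : StrictMono f := strictMono_snoc he hi
  have hmem (l : Fin (r + 1)) : f l ∈ Finset.univ.map ⟨f, hf.injective⟩ := by simp
  refine ⟨⟨Finset.univ.map ⟨f, hf.injective⟩, by simp⟩, ?_, fun l => ?_, ?_⟩
  · simpa only [f, Fin.snoc_last] using hmem (Fin.last r)
  · simpa only [f, Fin.snoc_castSucc] using hmem l.castSucc
  · rw [minors, ← Finset.orderEmbOfFin_unique _ hmem hf]
    have h := det_submatrix_cons_removeNth M f (Fin.last r)
    rwa [Fin.removeNth_last, Fin.init_snoc, show f (Fin.last r) = i from Fin.snoc_last _ _,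
      Fin.val_last] at h

end Annihilator

section Tangency

variable {n q k : ℕ}

lemma det_submatrix_cons_topErase (hn : q + 1 < n) (M : Matrix (Fin n) (Fin (q + 1)) ℝ)
    (b : Fin (q + 2)) (c : Fin (q + 1)) :
    (M.submatrix (Fin.cons (Fin.castLE hn (b.succAbove c))
      (Fin.castLE hn ∘ b.succAbove ∘ c.succAbove) : Fin (q + 1) → Fin n) id).det =
      (-1) ^ (c : ℕ) * minors M (topErase hn b) := by
  rw [minors, orderEmbOfFin_topErase, ← det_submatrix_cons_removeNth]
  rfl

lemma det_submatrix_cons_eq_zero (hn : q + 1 < n) {M : Matrix (Fin n) (Fin (q + 1)) ℝ}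
    {x : Fin n → ℝ} (hM : EqOnSlice (sliceIdx n (q + 1) k) (minors M) (modelPi n (q + 1) k x))
    {b : Fin (q + 2)} {c : Fin (q + 1)} (hb : (b : ℕ) < k) (hc : (b.succAbove c : ℕ) < k)
    {i : Fin n} (hib : i ≠ Fin.castLE hn b) (hic : i ≠ Fin.castLE hn (b.succAbove c)) :
    (M.submatrix (Fin.cons i (Fin.castLE hn ∘ b.succAbove ∘ c.succAbove) : Fin (q + 1) → Fin n)
      id).det = 0 := by
  set e : Fin q → Fin n := Fin.castLE hn ∘ b.succAbove ∘ c.succAbove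
  have he : StrictMono e := (Fin.strictMono_castLE hn).comp
    ((Fin.strictMono_succAbove b).comp (Fin.strictMono_succAbove c))
  have hrange {j : Fin n} (hj : (j : ℕ) < q + 2) (hjb : j ≠ Fin.castLE hn b)
      (hjc : j ≠ Fin.castLE hn (b.succAbove c)) : ∃ l, e l = j := by
    obtain ⟨j, rfl⟩ : ∃ j', Fin.castLE hn j' = j := ⟨⟨j, hj⟩, rfl⟩
    obtain ⟨j, rfl⟩ := Fin.exists_succAbove_eq fun h => hjb (congrArg _ h)
    obtain ⟨j, rfl⟩ := Fin.exists_succAbove_eq fun h => hjc (congrArg (Fin.castLE hn ∘ _) h)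
    exact ⟨j, rfl⟩
  by_cases hi : (i : ℕ) < q + 2
  · obtain ⟨l, hl⟩ := hrange hi hib hic
    refine Matrix.det_zero_of_row_eq (Fin.succ_ne_zero l).symm (funext fun m => ?_)
    simp [hl]
  obtain ⟨J, hiJ, heJ, hdet⟩ := exists_det_submatrix_cons_eq M he (i := i) fun l =>
    Fin.lt_def.2 ((b.succAbove (c.succAbove l)).2.trans_le (not_lt.1 hi))
  have hslice : sliceIdx n (q + 1) k ⊆ J.1 := by
    intro s hs
    rw [mem_sliceIdx] at hs
    obtain ⟨l, rfl⟩ := hrange hs.2 (by rintro rfl; exact absurd hb (not_lt.2 hs.1))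
      (by rintro rfl; exact absurd hc (not_lt.2 hs.1))
    exact heJ l
  rw [hdet, hM J hslice, modelPi_eq_zero hn x, mul_zero]
  rintro d rfl
  exact hi (mem_topErase.1 hiJ).2

/-- The plane spanned by the columns of `M` contains the fields `x_b ∂_a - x_a ∂_b` generating the
rotations, since every covector `α` vanishing on that plane vanishes on them. -/
lemma mul_eq_mul_of_vecMul_eq_zero (hn : q < n) {M : Matrix (Fin n) (Fin q) ℝ} {x : Fin n → ℝ}
    (hM : EqOnSlice (sliceIdx n q k) (minors M) (modelPi n q k x)) {α : Fin n → ℝ}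
    (hα : Matrix.vecMul α M = 0) {a b : Fin (q + 1)} (ha : (a : ℕ) < k) (hb : (b : ℕ) < k) :
    α (Fin.castLE hn a) * x (Fin.castLE hn b) = α (Fin.castLE hn b) * x (Fin.castLE hn a) := by
  rcases eq_or_ne a b with rfl | hab
  · rfl
  obtain ⟨c, rfl⟩ := Fin.exists_succAbove_eq hab
  obtain _ | q := q
  · exact c.elim0
  set e : Fin q → Fin n := Fin.castLE hn ∘ b.succAbove ∘ c.succAbove
  have hDa := det_submatrix_cons_topErase hn M b c
  have hDb := det_submatrix_cons_topErase hn M (b.succAbove c) (c.predAbove b)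
  have hswap : Fin.castLE hn ∘ (b.succAbove c).succAbove ∘ (c.predAbove b).succAbove = e :=
    funext fun l => congrArg _ (Fin.succAbove_succAbove_succAbove_predAbove b c l)
  rw [hswap, Fin.succAbove_succAbove_predAbove, hM.apply_topErase hn ha] at hDb
  rw [hM.apply_topErase hn hb] at hDa
  have hsum := sum_mul_det_submatrix_cons hα e
  rw [Fintype.sum_eq_add (Fin.castLE hn (b.succAbove c)) (Fin.castLE hn b)
    (by simp [Fin.succAbove_ne]) fun i hi => by
      rw [det_submatrix_cons_eq_zero hn hM hb ha hi.2 hi.1, mul_zero], hDa, hDb] at hsum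
  have hsign := Fin.neg_one_pow_succAbove_add_predAbove (R := ℝ) b c
  have hsq : ((-1 : ℝ) ^ ((b : ℕ) + (c : ℕ))) ^ 2 = 1 := by
    rw [← pow_mul, mul_comm, pow_mul, neg_one_sq, one_pow]
  simp only [pow_add] at hsign hsq
  set s : ℝ := (-1) ^ (b : ℕ) * (-1) ^ (c : ℕ)
  set α₁ := α (Fin.castLE hn (b.succAbove c))
  set α₂ := α (Fin.castLE hn b)
  set x₁ := x (Fin.castLE hn (b.succAbove c))
  set x₂ := x (Fin.castLE hn b)
  linear_combination s * hsum - s * α₂ * x₁ * hsign - (α₁ * x₂ - α₂ * x₁) * hsq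

end Tangency

/-! ### Paths of rotations -/

section RotationPaths

variable {m : Type*} [Fintype m] [DecidableEq m]

/-- The matrix of the reflection in the hyperplane `u^⊥`. Since `2 / 0 = 0`, `house 0 = 1`. -/
noncomputable def house (u : m → ℝ) : Matrix m m ℝ :=
  1 - (2 / (u ⬝ᵥ u)) • Matrix.vecMulVec u u

lemma house_zero : house (0 : m → ℝ) = 1 := by
  simp [house]

lemma house_smul {c : ℝ} (hc : c ≠ 0) (u : m → ℝ) : house (c • u) = house u := by
  ext i j
  simp only [house, Matrix.sub_apply, Matrix.smul_apply, Matrix.vecMulVec_apply, smul_dotProduct,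
    dotProduct_smul, Pi.smul_apply, smul_eq_mul]
  field_simp

lemma house_mulVec (u v : m → ℝ) :
    (house u).mulVec v = v - (2 / (u ⬝ᵥ u) * (u ⬝ᵥ v)) • u := by
  rw [house, Matrix.sub_mulVec, Matrix.one_mulVec, Matrix.smul_mulVec, Matrix.vecMulVec_mulVec]
  ext i
  simp [mul_assoc, mul_comm]

lemma house_transpose (u : m → ℝ) : (house u).transpose = house u := by
  simp [house, Matrix.transpose_vecMulVec]

lemma house_mul_self (u : m → ℝ) : house u * house u = 1 := by
  rcases eq_or_ne u 0 with rfl | hu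
  · rw [house_zero, mul_one]
  have huu : u ⬝ᵥ u ≠ 0 := fun h => hu (dotProduct_self_eq_zero.1 h)
  refine Matrix.ext_of_mulVec_single fun i => ?_
  rw [← Matrix.mulVec_mulVec, house_mulVec, house_mulVec, Matrix.one_mulVec, dotProduct_sub,
    dotProduct_smul, smul_eq_mul, sub_sub, ← add_smul, sub_eq_self]
  refine smul_eq_zero_of_left ?_ u
  field_simp
  ring

lemma det_house {u : m → ℝ} (hu : u ≠ 0) : (house u).det = -1 := by
  have huu : u ⬝ᵥ u ≠ 0 := fun h => hu (dotProduct_self_eq_zero.1 h)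
  have hrank : house u = 1 +
      Matrix.replicateCol Unit (-(2 / (u ⬝ᵥ u)) • u) * Matrix.replicateRow Unit u := by
    rw [← Matrix.vecMulVec_eq, Matrix.smul_vecMulVec, neg_smul, ← sub_eq_add_neg, house]
  rw [hrank, Matrix.det_one_add_replicateCol_mul_replicateRow, dotProduct_smul, smul_eq_mul]
  field_simp
  norm_num

lemma house_mem_orthogonalGroup (u : m → ℝ) : house u ∈ Matrix.orthogonalGroup m ℝ := by
  rw [Matrix.mem_orthogonalGroup_iff, house_transpose, house_mul_self]

lemma toEuclideanCLM_house (u : m → ℝ) (x : EuclideanSpace ℝ m) :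
    Matrix.toEuclideanCLM (𝕜 := ℝ) (house u) x = (ℝ ∙ WithLp.toLp 2 u)ᗮ.reflection x := by
  rw [Submodule.reflection_orthogonal_apply, Submodule.reflection_singleton_apply, neg_sub]
  have hinner : inner ℝ (WithLp.toLp 2 u) x = u ⬝ᵥ x.ofLp := by
    rw [EuclideanSpace.inner_eq_star_dotProduct, star_trivial, dotProduct_comm]
  have hnorm : ‖WithLp.toLp 2 u‖ ^ 2 = u ⬝ᵥ u := by
    rw [← real_inner_self_eq_norm_sq, EuclideanSpace.inner_toLp_toLp, star_trivial]
  ext i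
  rw [Matrix.ofLp_toEuclideanCLM, house_mulVec, hinner]
  simp only [RCLike.ofReal_real_eq_id, id_eq, hnorm, PiLp.sub_apply, PiLp.smul_apply,
    Pi.sub_apply, Pi.smul_apply, smul_eq_mul, nsmul_eq_mul]
  push_cast
  ring

lemma toEuclideanCLM_list_prod_house (l : List (EuclideanSpace ℝ m)) (x : EuclideanSpace ℝ m) :
    Matrix.toEuclideanCLM (𝕜 := ℝ) (l.map fun v => house v.ofLp).prod x =
      (l.map fun v => (ℝ ∙ v)ᗮ.reflection).prod x := by
  induction l with
  | nil => simp
  | cons v l ih =>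
    rw [List.map_cons, List.map_cons, List.prod_cons, List.prod_cons, map_mul,
      mul_apply_eq_comp, ih, toEuclideanCLM_house]
    rfl

lemma exists_list_prod_house_eq {A : Matrix m m ℝ} (hA : A ∈ Matrix.orthogonalGroup m ℝ) :
    ∃ l : List (m → ℝ), (l.map house).prod = A := by
  obtain ⟨l, -, hl⟩ := (Unitary.linearIsometryEquiv ⟨Matrix.toEuclideanCLM (𝕜 := ℝ) A,
    Unitary.map_mem Matrix.toEuclideanCLM hA⟩).reflections_generate_dim
  refine ⟨l.map WithLp.ofLp, Matrix.toEuclideanCLM.injective (ContinuousLinearMap.ext fun x => ?_)⟩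
  rw [List.map_map]
  exact (toEuclideanCLM_list_prod_house l x).trans (DFunLike.congr_fun hl x).symm

/-- A differentiable path of rotation matrices. -/
structure IsRotationPath (γ : ℝ → Matrix m m ℝ) : Prop where
  mem : ∀ t, γ t ∈ Matrix.specialOrthogonalGroup m ℝ
  differentiable : ∀ i j, Differentiable ℝ fun t => γ t i j

lemma IsRotationPath.mul {γ δ : ℝ → Matrix m m ℝ} (hγ : IsRotationPath γ)
    (hδ : IsRotationPath δ) : IsRotationPath fun t => γ t * δ t where
  mem t := mul_mem (hγ.mem t) (hδ.mem t)
  differentiable i j := by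
    simp only [Matrix.mul_apply]
    exact Differentiable.fun_sum fun l _ => (hγ.differentiable i l).mul (hδ.differentiable l j)

lemma IsRotationPath.differentiable_mulVec {γ : ℝ → Matrix m m ℝ} (hγ : IsRotationPath γ)
    (z : m → ℝ) : Differentiable ℝ fun t => (γ t).mulVec z :=
  differentiable_pi.2 fun i =>
    Differentiable.fun_sum fun j _ => (hγ.differentiable i j).mul_const (z j)

lemma IsRotationPath.continuous_mulVec {γ : ℝ → Matrix m m ℝ} (hγ : IsRotationPath γ) :
    Continuous fun p : ℝ × (m → ℝ) => (γ p.1).mulVec p.2 :=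
  (continuous_pi fun i => continuous_pi fun j =>
    (hγ.differentiable i j).continuous.comp continuous_fst).matrix_mulVec continuous_snd

lemma IsRotationPath.mulVec_dotProduct_deriv {γ : ℝ → Matrix m m ℝ} (hγ : IsRotationPath γ)
    (z : m → ℝ) (t : ℝ) :
    (γ t).mulVec z ⬝ᵥ deriv (fun s => (γ s).mulVec z) t = 0 := by
  have hconst (s : ℝ) : (γ s).mulVec z ⬝ᵥ (γ s).mulVec z = z ⬝ᵥ z := by
    have horth := (mem_specialOrthogonalGroup_iff_transpose_mul.1 (hγ.mem s)).1
    rw [Matrix.dotProduct_mulVec, Matrix.vecMul_mulVec, horth, Matrix.vecMul_one]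
  have hcoord (i : m) := hasDerivAt_pi.1 (hγ.differentiable_mulVec z t).hasDerivAt i
  have hsum := HasDerivAt.fun_sum (u := Finset.univ) fun i _ => (hcoord i).fun_mul (hcoord i)
  simp only [dotProduct] at hconst
  have hzero := ((hasDerivAt_const t _).congr_of_eventuallyEq (.of_forall hconst)).unique hsum
  rw [← mul_eq_zero_iff_left (two_ne_zero' ℝ), dotProduct, Finset.mul_sum, hzero]
  exact Finset.sum_congr rfl fun i _ => by ring

lemma isRotationPath_const {A : Matrix m m ℝ} (hA : A ∈ Matrix.specialOrthogonalGroup m ℝ) :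
    IsRotationPath fun _ => A where
  mem _ := hA
  differentiable _ _ := differentiable_const _

variable (m) in
/-- The rotations that can be joined to the identity by a differentiable path. -/
def rotationsJoinedToOne : Submonoid (Matrix m m ℝ) where
  carrier := {A | ∃ γ : ℝ → Matrix m m ℝ, IsRotationPath γ ∧ γ 0 = 1 ∧ γ 1 = A}
  one_mem' := ⟨fun _ => 1, isRotationPath_const (one_mem _), rfl, rfl⟩
  mul_mem' := by
    rintro _ _ ⟨γ, hγ, hγ0, rfl⟩ ⟨δ, hδ, hδ0, rfl⟩
    exact ⟨fun t => γ t * δ t, hγ.mul hδ, by simp only [hγ0, hδ0, mul_one], rfl⟩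

lemma isRotationPath_house_mul_house {u : m → ℝ} (hu : u ≠ 0) {w : ℝ → m → ℝ}
    (hw : Differentiable ℝ w) (hw0 : ∀ t, w t ≠ 0) :
    IsRotationPath fun t => house u * house (w t) where
  mem t := by
    rw [Matrix.mem_specialOrthogonalGroup_iff, Matrix.det_mul, det_house hu, det_house (hw0 t)]
    exact ⟨mul_mem (house_mem_orthogonalGroup u) (house_mem_orthogonalGroup (w t)), by norm_num⟩
  differentiable i j := by
    have hwi (l : m) : Differentiable ℝ fun t => w t l := differentiable_pi.1 hw l
    have hww (t : ℝ) : w t ⬝ᵥ w t ≠ 0 := fun h => hw0 t (dotProduct_self_eq_zero.1 h)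
    simp only [dotProduct] at hww
    simp only [Matrix.mul_apply, house, Matrix.sub_apply, Matrix.smul_apply,
      Matrix.vecMulVec_apply, smul_eq_mul, dotProduct]
    fun_prop (disch := exact hww)

lemma house_mul_house_mem_rotationsJoinedToOne {u v : m → ℝ} (hu : u ≠ 0) (hv : v ≠ 0) :
    house u * house v ∈ rotationsJoinedToOne m := by
  by_cases h : ∀ t : ℝ, AffineMap.lineMap u v t ≠ 0
  · refine ⟨_, isRotationPath_house_mul_house hu (AffineMap.lineMap u v).differentiable h, ?_, ?_⟩
    · simp only [AffineMap.lineMap_apply_zero, house_mul_self]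
    · simp only [AffineMap.lineMap_apply_one]
  · push Not at h
    obtain ⟨t, ht⟩ := h
    rw [AffineMap.lineMap_apply_module] at ht
    have ht0 : t ≠ 0 := by
      rintro rfl
      simp [hu] at ht
    have hvu : v = ((t - 1) / t) • u := by
      rw [div_eq_inv_mul, mul_smul, eq_inv_smul_iff₀ ht0, ← sub_eq_zero, ← ht]
      module
    have hc : (t - 1) / t ≠ 0 := fun h => hv (by rw [hvu, h, zero_smul])
    rw [hvu, house_smul hc, house_mul_self]
    exact one_mem _

lemma list_prod_house_mem_rotationsJoinedToOne (l : List (m → ℝ)) :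
    (l.map house).prod ∈ rotationsJoinedToOne m ∨
      ∃ u ≠ 0, house u * (l.map house).prod ∈ rotationsJoinedToOne m := by
  induction l with
  | nil => exact .inl (one_mem _)
  | cons v l ih =>
    rw [List.map_cons, List.prod_cons]
    rcases eq_or_ne v 0 with rfl | hv
    · rwa [house_zero, one_mul]
    rcases ih with hl | ⟨u, hu, hl⟩
    · exact .inr ⟨v, hv, by rwa [← mul_assoc, house_mul_self, one_mul]⟩
    · left
      have hpair := mul_mem (house_mul_house_mem_rotationsJoinedToOne hv hu) hl
      rwa [mul_assoc, ← mul_assoc (house u), house_mul_self, one_mul] at hpair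

lemma mem_rotationsJoinedToOne {A : Matrix m m ℝ} (hA : A ∈ Matrix.specialOrthogonalGroup m ℝ) :
    A ∈ rotationsJoinedToOne m := by
  rw [Matrix.mem_specialOrthogonalGroup_iff] at hA
  obtain ⟨l, rfl⟩ := exists_list_prod_house_eq hA.1
  refine (list_prod_house_mem_rotationsJoinedToOne l).resolve_right ?_
  rintro ⟨u, hu, γ, hγ, -, hγ1⟩
  have hdet := (Matrix.mem_specialOrthogonalGroup_iff.1 (hγ.mem 1)).2
  rw [hγ1, Matrix.det_mul, det_house hu, hA.2] at hdet
  norm_num at hdet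

end RotationPaths

/-! ### Local first integrals -/

section FirstIntegrals

open Topology

variable {n q k : ℕ}

lemma jac_mulVec (φ : (Fin n → ℝ) → (Fin n → ℝ)) (x v : Fin n → ℝ) :
    (jac φ x).mulVec v = fderiv ℝ φ x v := by
  have hjac : jac φ x = LinearMap.toMatrix' (fderiv ℝ φ x : (Fin n → ℝ) →ₗ[ℝ] (Fin n → ℝ)) := by
    ext i j
    simp [jac, LinearMap.toMatrix'_apply]
  rw [hjac, LinearMap.toMatrix'_mulVec, ContinuousLinearMap.coe_coe]

lemma IsSmoothDiffeoOn.differentiableAt {φ : (Fin n → ℝ) → (Fin n → ℝ)} {W : Set (Fin n → ℝ)}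
    (h : IsSmoothDiffeoOn φ W) {z : Fin n → ℝ} (hz : z ∈ W) : DifferentiableAt ℝ φ z :=
  (h.2.2.1.contDiffAt (h.1.mem_nhds hz)).differentiableAt (by simp)

lemma IsSmoothDiffeoOn.isUnit_det_jac {φ : (Fin n → ℝ) → (Fin n → ℝ)} {W : Set (Fin n → ℝ)}
    (h : IsSmoothDiffeoOn φ W) {z : Fin n → ℝ} (hz : z ∈ W) : IsUnit (jac φ z).det := by
  have hφ := (h.differentiableAt hz).hasFDerivAt
  obtain ⟨hW, hφW, -, ψ, hψ, hψφ, -⟩ := h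
  have hψ' : HasFDerivAt ψ (fderiv ℝ ψ (φ z)) (φ z) :=
    ((hψ.contDiffAt (hφW.mem_nhds ⟨z, hz, rfl⟩)).differentiableAt (by simp)).hasFDerivAt
  have hid : ψ ∘ φ =ᶠ[𝓝 z] id := by
    filter_upwards [hW.mem_nhds hz] with x hx using hψφ x hx
  have hcomp : (fderiv ℝ ψ (φ z)).comp (fderiv ℝ φ z) = ContinuousLinearMap.id ℝ _ :=
    ((hψ'.comp z hφ).congr_of_eventuallyEq hid.symm).unique (hasFDerivAt_id z)
  have hmul : jac ψ (φ z) * jac φ z = 1 := by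
    refine Matrix.ext_of_mulVec_single fun i => ?_
    rw [← Matrix.mulVec_mulVec, jac_mulVec, jac_mulVec, Matrix.one_mulVec]
    exact DFunLike.congr_fun hcomp (Pi.single i 1)
  exact (Matrix.isUnit_iff_isUnit_det _).1 (IsUnit.of_mul_eq_one_right _ hmul)

lemma jac_mul_row_eq {φ : (Fin n → ℝ) → (Fin n → ℝ)} {A : Matrix (Fin n) (Fin n) ℝ}
    {x : Fin n → ℝ} (hx : DifferentiableAt ℝ φ x) (hAx : DifferentiableAt ℝ φ (A.mulVec x))
    {j : Fin n} (h : ∀ᶠ z in 𝓝 x, φ (A.mulVec z) j = φ z j) :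
    (jac φ (A.mulVec x) * A) j = jac φ x j := by
  have hA : HasFDerivAt A.mulVec (Matrix.toLin' A).toContinuousLinearMap x :=
    (Matrix.toLin' A).toContinuousLinearMap.hasFDerivAt
  have hcomp := hasFDerivAt_pi'.1 (hAx.hasFDerivAt.comp x hA) j
  have heq := hcomp.unique ((hasFDerivAt_pi'.1 hx.hasFDerivAt j).congr_of_eventuallyEq h)
  ext i
  have hi : (jac φ (A.mulVec x) * A).mulVec (Pi.single i 1) j =
      (jac φ x).mulVec (Pi.single i 1) j := by
    rw [← Matrix.mulVec_mulVec, jac_mulVec, jac_mulVec]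
    exact DFunLike.congr_fun heq (Pi.single i 1)
  simpa only [Matrix.mulVec_single_one, Matrix.col_apply] using hi

lemma mulVec_apply_eq_zero_of_dotProduct_eq_zero (hn : q < n) (hkq : k ≤ q + 1)
    {X : Matrix (Fin n) (Fin n) ℝ} (hX : IsUnit X.det) {w : MultiVec n q}
    (hw : extPow n q X w = stdVec n q) {z : Fin n → ℝ}
    (hs : EqOnSlice (sliceIdx n q k) w (modelPi n q k z)) {b : Fin (q + 1)} (hb : (b : ℕ) < k)
    (hzb : z (Fin.castLE hn b) ≠ 0) {u : Fin n → ℝ} (hu : ∀ i : Fin n, k ≤ (i : ℕ) → u i = 0)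
    (hzu : z ⬝ᵥ u = 0) {j : Fin n} (hj : q ≤ (j : ℕ)) : X.mulVec u j = 0 := by
  have hw' : w = minors (X⁻¹.submatrix id (Fin.castLE hn.le)) := by
    rw [← extPow_stdVec, ← hw, extPow_nonsing_inv_extPow hX]
  have hα : Matrix.vecMul (X j) (X⁻¹.submatrix id (Fin.castLE hn.le)) = 0 := by
    ext l
    have hjl : j ≠ Fin.castLE hn.le l := by
      rintro rfl
      exact absurd l.2 (not_lt.2 hj)
    have hinv := congrFun (congrFun (Matrix.mul_nonsing_inv X hX) j) (Fin.castLE hn.le l)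
    rwa [Matrix.one_apply_ne hjl] at hinv
  refine (mul_eq_zero.1 ?_).resolve_left hzb
  calc z (Fin.castLE hn b) * X.mulVec u j
      = X j (Fin.castLE hn b) * (z ⬝ᵥ u) := by
        simp only [Matrix.mulVec, dotProduct, Finset.mul_sum]
        refine Finset.sum_congr rfl fun i _ => ?_
        rcases lt_or_ge (i : ℕ) k with hi | hi
        · have := mul_eq_mul_of_vecMul_eq_zero hn (hw' ▸ hs) hα (a := ⟨i, hi.trans_le hkq⟩) hi hb
          simp only [Fin.castLE_mk, Fin.eta] at this
          linear_combination u i * this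
        · simp only [hu i hi, mul_zero]
    _ = 0 := by rw [hzu, mul_zero]

lemma ghat_mulVec_apply_of_le (g : Matrix (Fin k) (Fin k) ℝ) (z : Fin n → ℝ) {i : Fin n}
    (hi : k ≤ (i : ℕ)) : (ghat n k g).mulVec z i = z i := by
  simp [Matrix.mulVec, dotProduct, ghat, not_lt.2 hi]

lemma IsRotationPath.ghat {γ : ℝ → Matrix (Fin k) (Fin k) ℝ} (hγ : IsRotationPath γ)
    (h : k ≤ n) : IsRotationPath fun t => ghat n k (γ t) where
  mem t := ghat_mem_specialOrthogonalGroup h (hγ.mem t)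
  differentiable i j := by
    by_cases hij : (i : ℕ) < k ∧ (j : ℕ) < k
    · simpa [NambuLin.ghat, hij.1, hij.2] using hγ.differentiable ⟨i, hij.1⟩ ⟨j, hij.2⟩
    · rcases lt_or_ge (i : ℕ) k with hi | hi
      · simp [NambuLin.ghat, hi, show ¬(j : ℕ) < k from fun hj => hij ⟨hi, hj⟩]
      · simp [NambuLin.ghat, not_lt.2 hi]

end FirstIntegrals

/-! ### Invariance along paths of rotations -/

section Invariance

open Topology

variable {n q k : ℕ}

/-- `φ` is a chart with domain `W` in which `P` becomes `e₁ ∧ ⋯ ∧ e_q`. -/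
structure IsStraightening (φ : (Fin n → ℝ) → (Fin n → ℝ)) (P : (Fin n → ℝ) → MultiVec n q)
    (W : Set (Fin n → ℝ)) : Prop where
  diffeo : IsSmoothDiffeoOn φ W
  extPow_jac : ∀ x ∈ W, extPow n q (jac φ x) (P x) = stdVec n q

lemma IsStraightening.eventually_apply_ghat_mulVec_eq (hn : q < n) (hkq : k ≤ q + 1)
    {φ : (Fin n → ℝ) → (Fin n → ℝ)} {P : (Fin n → ℝ) → MultiVec n q} {W : Set (Fin n → ℝ)}
    (hφ : IsStraightening φ P W)
    (hs : ∀ x ∈ W, EqOnSlice (sliceIdx n q k) (P x) (modelPi n q k x))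
    {γ : ℝ → Matrix (Fin k) (Fin k) ℝ} (hγ : IsRotationPath γ) {t₀ : ℝ} (hγ0 : γ t₀ = 1)
    {x : Fin n → ℝ} (hx : x ∈ W) {b : Fin (q + 1)} (hb : (b : ℕ) < k)
    (hxb : x (Fin.castLE hn b) ≠ 0) :
    ∀ᶠ p : ℝ × (Fin n → ℝ) in 𝓝 (t₀, x), ∀ j : Fin n, q ≤ (j : ℕ) →
      φ ((ghat n k (γ p.1)).mulVec p.2) j = φ p.2 j := by
  have hΓ := hγ.ghat (n := n) (by omega)
  have hΓ0 (z : Fin n → ℝ) : (ghat n k (γ t₀)).mulVec z = z := by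
    rw [hγ0, ghat_one (by omega), Matrix.one_mulVec]
  have hgood : {y | y ∈ W ∧ y (Fin.castLE hn b) ≠ 0} ∈ 𝓝 x :=
    Filter.inter_mem (hφ.diffeo.1.mem_nhds hx)
      ((continuous_apply (Fin.castLE hn b)).continuousAt.eventually_ne hxb)
  have hnear := hΓ.continuous_mulVec.continuousAt.eventually_mem
    (x := (t₀, x)) (by rw [hΓ0]; exact hgood)
  obtain ⟨r, hr, hball⟩ := Metric.eventually_nhds_iff_ball.1 hnear
  filter_upwards [Metric.ball_mem_nhds _ hr] with ⟨s, z⟩ hsz j hj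
  rw [← ball_prod_same] at hsz hball
  have hderiv (t : ℝ) (ht : t ∈ Metric.ball t₀ r) :
      HasDerivAt (fun t => φ ((ghat n k (γ t)).mulVec z) j) 0 t := by
    obtain ⟨hW, hne⟩ := hball (t, z) ⟨ht, hsz.2⟩
    have hcurve := hΓ.differentiable_mulVec z
    have hchain := hasDerivAt_pi.1 ((hφ.diffeo.differentiableAt hW).hasFDerivAt.comp_hasDerivAt t
      (hcurve t).hasDerivAt) j
    rw [← jac_mulVec, mulVec_apply_eq_zero_of_dotProduct_eq_zero hn hkq
      (hφ.diffeo.isUnit_det_jac hW) (hφ.extPow_jac _ hW) (hs _ hW) hb hne (fun i hi => ?_)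
      (hΓ.mulVec_dotProduct_deriv z t) hj] at hchain
    · exact hchain
    · have hcoord := hasDerivAt_pi.1 (hcurve t).hasDerivAt i
      simp only [ghat_mulVec_apply_of_le _ z hi] at hcoord
      exact hcoord.unique (hasDerivAt_const t _)
  have hconst := Metric.isOpen_ball.is_const_of_deriv_eq_zero (convex_ball t₀ r).isPreconnected
    (fun t ht => (hderiv t ht).differentiableAt.differentiableWithinAt)
    (fun t ht => (hderiv t ht).deriv) hsz.1 (Metric.mem_ball_self hr)
  rwa [hΓ0] at hconst

lemma eq_of_extPow_ghat_eq_smul (hn : q < n) (hkq : k ≤ q + 1) {w w' : MultiVec n q}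
    {x : Fin n → ℝ} {g : Matrix (Fin k) (Fin k) ℝ}
    (hg : g ∈ Matrix.specialOrthogonalGroup (Fin k) ℝ)
    (hw : EqOnSlice (sliceIdx n q k) w (modelPi n q k x))
    (hw' : EqOnSlice (sliceIdx n q k) w' (modelPi n q k ((ghat n k g).mulVec x)))
    {b : Fin (q + 1)} (hb : (b : ℕ) < k) (hgxb : (ghat n k g).mulVec x (Fin.castLE hn b) ≠ 0)
    {c : ℝ} (hc : extPow n q (ghat n k g) w = c • w') : extPow n q (ghat n k g) w = w' := by
  have hmem := sliceIdx_subset_topErase hn hb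
  have hrow : ∀ s ∈ sliceIdx n q k, ∀ j, j ≠ s → ghat n k g s j = 0 := fun s hs j hj =>
    ghat_apply_eq_zero g hj (.inl (mem_sliceIdx.1 hs).1)
  have hcoord : c * w' (topErase hn b) = w' (topErase hn b) := by
    calc c * w' (topErase hn b) = extPow n q (ghat n k g) w (topErase hn b) := by
          rw [hc, Pi.smul_apply, smul_eq_mul]
      _ = extPow n q (ghat n k g) (modelPi n q k x) (topErase hn b) := hw.extPow hrow _ hmem
      _ = w' (topErase hn b) := by rw [extPow_ghat_modelPi_topErase hn hkq hg, hw' _ hmem]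
  have hne : w' (topErase hn b) ≠ 0 := by
    rw [hw'.apply_topErase hn hb]
    exact mul_ne_zero (by norm_num) hgxb
  rw [hc, (mul_eq_right₀ hne).1 hcoord, one_smul]

lemma eventually_extPow_ghat_eq (hn : q < n) (hkq : k ≤ q + 1) {U : Set (Fin n → ℝ)}
    {P : (Fin n → ℝ) → MultiVec n q} (hN : IsNambu n q P U)
    (hs : ∀ x ∈ U, EqOnSlice (sliceIdx n q k) (P x) (modelPi n q k x))
    {γ : ℝ → Matrix (Fin k) (Fin k) ℝ} (hγ : IsRotationPath γ) {t₀ : ℝ} (hγ0 : γ t₀ = 1)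
    {x : Fin n → ℝ} (hx : x ∈ U) {b : Fin (q + 1)} (hb : (b : ℕ) < k)
    (hxb : x (Fin.castLE hn b) ≠ 0) :
    ∀ᶠ s in 𝓝 t₀,
      extPow n q (ghat n k (γ s)) (P x) = P ((ghat n k (γ s)).mulVec x) := by
  have hPx : P x ≠ 0 := fun h => hxb <| by
    simpa [h] using ((hs x hx).apply_topErase hn hb).symm
  obtain ⟨W, hxW, hWU, φ, hφ, hφP⟩ := hN.2 x hx hPx
  have hstraight : IsStraightening φ P W := ⟨hφ, hφP⟩
  have hΓ := (hγ.ghat (n := n) (by omega)).differentiable_mulVec x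
  have hgood : {y | y ∈ W ∧ y (Fin.castLE hn b) ≠ 0} ∈ 𝓝 ((ghat n k (γ t₀)).mulVec x) := by
    rw [hγ0, ghat_one (by omega), Matrix.one_mulVec]
    exact Filter.inter_mem (hφ.1.mem_nhds hxW)
      ((continuous_apply (Fin.castLE hn b)).continuousAt.eventually_ne hxb)
  filter_upwards [hΓ.continuous.continuousAt.eventually_mem hgood,
    (hstraight.eventually_apply_ghat_mulVec_eq hn hkq (fun y hy => hs y (hWU hy)) hγ hγ0 hxW hb
      hxb).curry_nhds] with s hsW hφs
  have hrows (j : Fin n) (hj : q ≤ (j : ℕ)) :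
      (jac φ ((ghat n k (γ s)).mulVec x) * ghat n k (γ s)) j = jac φ x j :=
    jac_mul_row_eq (hφ.differentiableAt hxW) (hφ.differentiableAt hsW.1)
      (hφs.mono fun z hz => hz j hj)
  obtain ⟨c, hc⟩ := exists_extPow_eq_smul_of_rows_eq hn.le (hφ.isUnit_det_jac hxW)
    (hφ.isUnit_det_jac hsW.1) (hφP x hxW) (hφP _ hsW.1) hrows
  exact eq_of_extPow_ghat_eq_smul hn hkq (hγ.mem s) (hs x hx) (hs _ (hWU hsW.1)) hb hsW.2 hc

lemma exists_ghat_mulVec_castLE_ne_zero (hn : q < n) (hkq : k ≤ q + 1)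
    {g : Matrix (Fin k) (Fin k) ℝ} (hg : g ∈ Matrix.specialOrthogonalGroup (Fin k) ℝ)
    {x : Fin n → ℝ} {b : Fin (q + 1)} (hb : (b : ℕ) < k) (hxb : x (Fin.castLE hn b) ≠ 0) :
    ∃ a : Fin (q + 1), (a : ℕ) < k ∧ (ghat n k g).mulVec x (Fin.castLE hn a) ≠ 0 := by
  by_contra! hzero
  have hx : x = (ghat n k g.transpose).mulVec ((ghat n k g).mulVec x) := by
    rw [Matrix.mulVec_mulVec, ← ghat_mul (by omega),
      (mem_specialOrthogonalGroup_iff_transpose_mul.1 hg).1, ghat_one (by omega), Matrix.one_mulVec]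
  rw [hx, Matrix.mulVec, dotProduct] at hxb
  refine hxb (Finset.sum_eq_zero fun i _ => ?_)
  rcases lt_or_ge (i : ℕ) k with hi | hi
  · exact mul_eq_zero_of_right _ (hzero ⟨i, hi.trans_le hkq⟩ hi)
  · refine mul_eq_zero_of_left (ghat_apply_eq_zero _ ?_ (.inr hi)) _
    rintro rfl
    exact absurd hb (not_lt.2 hi)

lemma isLocallyConstant_extPow_ghat_transpose (hn : q < n) (hkq : k ≤ q + 1)
    {U : Set (Fin n → ℝ)} {P : (Fin n → ℝ) → MultiVec n q} (hN : IsNambu n q P U)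
    (hs : ∀ x ∈ U, EqOnSlice (sliceIdx n q k) (P x) (modelPi n q k x))
    {γ : ℝ → Matrix (Fin k) (Fin k) ℝ} (hγ : IsRotationPath γ) {x : Fin n → ℝ}
    (hγU : ∀ t, (ghat n k (γ t)).mulVec x ∈ U) {b : Fin (q + 1)} (hb : (b : ℕ) < k)
    (hxb : x (Fin.castLE hn b) ≠ 0) :
    IsLocallyConstant fun t =>
      extPow n q (ghat n k (γ t).transpose) (P ((ghat n k (γ t)).mulVec x)) := by
  have hkn : k ≤ n := by omega
  have horth (t : ℝ) := (mem_specialOrthogonalGroup_iff_transpose_mul.1 (hγ.mem t)).1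
  rw [IsLocallyConstant.iff_eventually_eq]
  intro t
  have hδ : IsRotationPath fun s => γ s * (γ t).transpose :=
    hγ.mul (isRotationPath_const (transpose_mem_specialOrthogonalGroup (hγ.mem t)))
  obtain ⟨a, ha, hxa⟩ := exists_ghat_mulVec_castLE_ne_zero hn hkq (hγ.mem t) hb hxb
  filter_upwards [eventually_extPow_ghat_eq hn hkq hN hs hδ (mul_eq_one_comm.1 (horth t))
    (hγU t) ha hxa] with s hPs
  have hmulVec : (ghat n k (γ s * (γ t).transpose)).mulVec ((ghat n k (γ t)).mulVec x) =
      (ghat n k (γ s)).mulVec x := by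
    rw [Matrix.mulVec_mulVec, ← ghat_mul hkn, mul_assoc, horth, mul_one]
  rw [hmulVec] at hPs
  rw [← hPs, ← extPow_mul, ← ghat_mul hkn, ← mul_assoc, horth, one_mul]

lemma extPow_ghat_eq_of_castLE_ne_zero (hn : q < n) (hkq : k ≤ q + 1) {U : Set (Fin n → ℝ)}
    (hU : ∀ g ∈ Matrix.specialOrthogonalGroup (Fin k) ℝ, ∀ x ∈ U, (ghat n k g).mulVec x ∈ U)
    {P : (Fin n → ℝ) → MultiVec n q} (hN : IsNambu n q P U)
    (hs : ∀ x ∈ U, EqOnSlice (sliceIdx n q k) (P x) (modelPi n q k x))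
    {g : Matrix (Fin k) (Fin k) ℝ} (hg : g ∈ Matrix.specialOrthogonalGroup (Fin k) ℝ)
    {x : Fin n → ℝ} (hx : x ∈ U) {b : Fin (q + 1)} (hb : (b : ℕ) < k)
    (hxb : x (Fin.castLE hn b) ≠ 0) :
    extPow n q (ghat n k g) (P x) = P ((ghat n k g).mulVec x) := by
  have hkn : k ≤ n := by omega
  obtain ⟨γ, hγ, hγ0, rfl⟩ := mem_rotationsJoinedToOne hg
  have hconst := (isLocallyConstant_extPow_ghat_transpose hn hkq hN hs hγ
    (fun t => hU _ (hγ.mem t) x hx) hb hxb).apply_eq_of_preconnectedSpace 0 1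
  have horth := mul_eq_one_comm.1 ((mem_specialOrthogonalGroup_iff_transpose_mul.1 hg).1)
  simp only [hγ0, Matrix.transpose_one, ghat_one hkn, extPow_one, Matrix.one_mulVec] at hconst
  rw [hconst, ← extPow_mul, ← ghat_mul hkn, horth, ghat_one hkn, extPow_one]

lemma subset_closure_inter_apply_ne_zero {U : Set (Fin n → ℝ)} (hU : IsOpen U) (i : Fin n) :
    U ⊆ closure (U ∩ {x | x i ≠ 0}) :=
  ((dense_compl_singleton (0 : ℝ)).preimage (isOpenMap_eval i)).open_subset_closure_inter hU

lemma extPow_ghat_eq (hn : q < n) (hk : 1 ≤ k) (hkq : k ≤ q + 1) {U : Set (Fin n → ℝ)}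
    (hUo : IsOpen U)
    (hU : ∀ g ∈ Matrix.specialOrthogonalGroup (Fin k) ℝ, ∀ x ∈ U, (ghat n k g).mulVec x ∈ U)
    {P : (Fin n → ℝ) → MultiVec n q} (hN : IsNambu n q P U)
    (hs : ∀ x ∈ U, EqOnSlice (sliceIdx n q k) (P x) (modelPi n q k x))
    {g : Matrix (Fin k) (Fin k) ℝ} (hg : g ∈ Matrix.specialOrthogonalGroup (Fin k) ℝ) :
    Set.EqOn (fun x => extPow n q (ghat n k g) (P x)) (fun x => P ((ghat n k g).mulVec x)) U := by
  have hP : ContinuousOn P U := hN.1.continuousOn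
  have hdense : U ⊆ closure (U ∩ {x | x (Fin.castLE hn 0) ≠ 0}) :=
    subset_closure_inter_apply_ne_zero hUo _
  refine Set.EqOn.of_subset_closure (fun x hx => ?_) ((continuous_extPow _).comp_continuousOn hP)
    (hP.comp (Continuous.matrix_mulVec continuous_const continuous_id).continuousOn (hU g hg))
    Set.inter_subset_left hdense
  exact extPow_ghat_eq_of_castLE_ne_zero hn hkq hU hN hs hg hx.1 (b := 0) hk hx.2

end Invariance

theorem so_invariance_general (n q k : ℕ) (hn : q < n) (hk : 1 ≤ k) (hkq : k ≤ q + 1)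
    (U : Set (Fin n → ℝ)) (hU : IsOpen U)
    (hUinv : ∀ g : Matrix (Fin k) (Fin k) ℝ, g.transpose * g = 1 → g.det = 1 →
      (fun x => (ghat n k g).mulVec x) '' U = U)
    (P : (Fin n → ℝ) → MultiVec n q) (hN : IsNambu n q P U)
    (hslice : ∀ x ∈ U, contr n q (k - 1) (sliceIdx n q k) (P x) =
      contr n q (k - 1) (sliceIdx n q k) (modelPi n q k x)) :
    ∀ g : Matrix (Fin k) (Fin k) ℝ, g.transpose * g = 1 → g.det = 1 →
      ∀ x ∈ U, extPow n q (ghat n k g) (P ((ghat n k g)⁻¹.mulVec x)) = P x := by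
  intro g hg hdet x hx
  obtain ⟨y, hy, rfl⟩ : x ∈ (fun x => (ghat n k g).mulVec x) '' U := by rwa [hUinv g hg hdet]
  have hUrot (g : Matrix (Fin k) (Fin k) ℝ) (hg : g ∈ Matrix.specialOrthogonalGroup (Fin k) ℝ)
      (x : Fin n → ℝ) (hx : x ∈ U) : (ghat n k g).mulVec x ∈ U := by
    rw [mem_specialOrthogonalGroup_iff_transpose_mul] at hg
    exact hUinv g hg.1 hg.2 ▸ Set.mem_image_of_mem _ hx
  have hs (x : Fin n → ℝ) (hx : x ∈ U) :
      EqOnSlice (sliceIdx n q k) (P x) (modelPi n q k x) :=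
    eqOnSlice_of_contr_eq (by rw [card_sliceIdx hn hkq]; omega) (hslice x hx)
  have hinv : (ghat n k g)⁻¹ * ghat n k g = 1 :=
    Matrix.nonsing_inv_mul _ (by rw [det_ghat (by omega), hdet]; exact isUnit_one)
  simp only [Matrix.mulVec_mulVec, hinv, Matrix.one_mulVec]
  exact extPow_ghat_eq hn hk hkq hU hUrot hN hs
    (mem_specialOrthogonalGroup_iff_transpose_mul.2 ⟨hg, hdet⟩) hy

/-- Step 2 of the proof of Theorem 1.2 in the paper. Let `Π` be a
smooth Nambu structure of order `q` on an `SO(k)`-invariant neighborhood `U` of `0`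
such that `Π − Π_{k,q}` is flat along `Σ = {x₁ = ⋯ = x_{q+1} = 0}` and the slicing
`(e*_{k+1} ∧ ⋯ ∧ e*_{q+1}) ⌟ Π` is already linear (equal to the slicing of
`Π_{k,q}`). Then `Π` is `SO(k)`-invariant: `⋀^q ĝ (Π(ĝ⁻¹x)) = Π(x)`. -/
theorem so_invariance (n q k : ℕ) (hq : 3 ≤ q) (hn : q < n) (hk3 : 3 ≤ k) (hkq : k ≤ q)
    (U : Set (Fin n → ℝ)) (hU : IsOpen U) (h0U : (0 : Fin n → ℝ) ∈ U)
    (hUinv : ∀ g : Matrix (Fin k) (Fin k) ℝ, g.transpose * g = 1 → g.det = 1 →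
      (fun x => (ghat n k g).mulVec x) '' U = U)
    (P : (Fin n → ℝ) → MultiVec n q) (hN : IsNambu n q P U)
    (hflat : ∀ x ∈ U, (∀ j : Fin n, (j : ℕ) < q + 1 → x j = 0) →
      ∀ l : ℕ, iteratedFDerivWithin ℝ l (fun z => P z - modelPi n q k z) U x = 0)
    (hslice : ∀ x ∈ U, contr n q (k - 1) (sliceIdx n q k) (P x) =
      contr n q (k - 1) (sliceIdx n q k) (modelPi n q k x)) :
    ∀ g : Matrix (Fin k) (Fin k) ℝ, g.transpose * g = 1 → g.det = 1 →
      ∀ x ∈ U, extPow n q (ghat n k g) (P ((ghat n k g)⁻¹.mulVec x)) = P x :=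
  so_invariance_general n q k hn (by omega) (by omega) U hU hUinv P hN hslice

end NambuLin
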